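/- arXiv:2112.12034 — 2 statements merged into one kernel-verified Lean document; each statement's English description precedes it below -/
import Mathlib

section
/- Let G be the hypercube graph on the vertex set Fin 4 → ZMod 2, where two vertices are adjacent if and only if they differ in exactly one coordinate. Then G admits a completely degenerate equilibrium of the identical Kuramoto system. -/
open Real

open Classical in
/-- Adjacency indicator: `1` if `j` and `k` are adjacent in `G`, `0` otherwise. -/
noncomputable def adjInd {V : Type*} (G : SimpleGraph V) (j k : V) : ℝ :=
  if G.Adj j k then 1 else 0

/-- A completely degenerate equilibrium of the identical Kuramoto system on `G`. -/
def IsCDE {V : Type*} [Fintype V] (G : SimpleGraph V) (θ : V → ℝ) : Prop :=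
  (∀ k, ∑ j, adjInd G j k * Real.sin (θ j - θ k) = 0) ∧
  (∀ j k, G.Adj j k → Real.cos (θ j - θ k) = 0)

/-!
A completely degenerate equilibrium on `G` and one on `H` add up to one on the Cartesian product
`G □ H`, because moving along an edge of the product changes only one of the two summands.
The 4-cycle carries such an equilibrium, namely the rotating state `0, π/2, π, 3π/2`, in which the
two neighbours of each vertex pull it with opposite unit forces. The Gray code identifies the
4-cycle with the 2-cube, and the `2m`-cube is the `m`-fold Cartesian power of the 2-cube.
-/

section CompletelyDegenerateEquilibria

variable {V W : Type*} {G : SimpleGraph V} {H : SimpleGraph W}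

theorem adjInd_map_iso (e : G ≃g H) (j k : V) : adjInd H (e j) (e k) = adjInd G j k := by
  classical exact if_congr e.map_adj_iff rfl rfl

theorem sum_adjInd_mul [Fintype V] [DecidableRel G.Adj] (k : V) (f : V → ℝ) :
    ∑ j, adjInd G j k * f j = ∑ j ∈ G.neighborFinset k, f j := by
  simp [adjInd, SimpleGraph.neighborFinset_eq_filter, Finset.sum_filter, G.adj_comm k]

theorem IsCDE.comp_iso [Fintype V] [Fintype W] {η : W → ℝ} (hη : IsCDE H η) (e : G ≃g H) :
    IsCDE G (η ∘ e) := by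
  refine ⟨fun k => ?_, fun j k hjk => hη.2 _ _ (e.map_adj_iff.mpr hjk)⟩
  calc ∑ j, adjInd G j k * sin (η (e j) - η (e k))
      = ∑ j, adjInd H (e j) (e k) * sin (η (e j) - η (e k)) := by
        simp only [adjInd_map_iso]
    _ = ∑ l, adjInd H l (e k) * sin (η l - η (e k)) :=
        e.toEquiv.sum_comp fun l => adjInd H l (e k) * sin (η l - η (e k))
    _ = 0 := hη.1 (e k)

theorem IsCDE.boxProd [Fintype V] [Fintype W] {θ : V → ℝ} {η : W → ℝ}
    (hθ : IsCDE G θ) (hη : IsCDE H η) : IsCDE (G □ H) fun p => θ p.1 + η p.2 := by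
  classical
  refine ⟨fun q => ?_, fun p q hpq => ?_⟩
  · calc ∑ p, adjInd (G □ H) p q * sin (θ p.1 + η p.2 - (θ q.1 + η q.2))
        = ∑ x, adjInd G x q.1 * sin (θ x - θ q.1) +
            ∑ y, adjInd H y q.2 * sin (η y - η q.2) := by
          simp only [sum_adjInd_mul, SimpleGraph.neighborFinset_boxProd, Finset.sum_disjUnion,
            Finset.sum_product, Finset.sum_singleton, add_sub_add_right_eq_sub,
            add_sub_add_left_eq_sub]
      _ = 0 := by rw [hθ.1, hη.1, add_zero]
  · rcases hpq with ⟨hG, h⟩ | ⟨hH, h⟩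
    · simpa [h] using hθ.2 _ _ hG
    · simpa [h] using hη.2 _ _ hH

end CompletelyDegenerateEquilibria

theorem isCDE_cycleGraph_of_sin_eq_one {n : ℕ} {θ : Fin (n + 2) → ℝ}
    (hθ : ∀ k, sin (θ (k + 1) - θ k) = 1) : IsCDE (SimpleGraph.cycleGraph (n + 2)) θ := by
  have sin_pred (k) : sin (θ (k - 1) - θ k) = -1 := by
    rw [← neg_sub, sin_neg, ← hθ (k - 1), sub_add_cancel]
  have cos_succ (k) : cos (θ (k + 1) - θ k) = 0 :=
    cos_eq_zero_iff_sin_eq.mpr (.inl (hθ k))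
  refine ⟨fun k => ?_, fun j k hjk => ?_⟩
  · have pred_ne_succ : k - 1 ≠ k + 1 := by
      intro h
      have := hθ k
      rw [← h, sin_pred] at this
      norm_num at this
    rw [sum_adjInd_mul, SimpleGraph.cycleGraph_neighborFinset, Finset.sum_pair pred_ne_succ,
      sin_pred, hθ, neg_add_cancel]
  · rcases SimpleGraph.cycleGraph_adj.mp hjk with h | h
    · rw [eq_add_of_sub_eq' h, cos_succ]
    · rw [eq_add_of_sub_eq' h, ← cos_neg, neg_sub, cos_succ]

theorem isCDE_cycleGraph_four :
    IsCDE (SimpleGraph.cycleGraph 4) fun i => (i : ℕ) * (π / 2) := by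
  refine isCDE_cycleGraph_of_sin_eq_one fun k => ?_
  have sin_succ_sub (m : ℕ) : sin (((m + 1 : ℕ) : ℝ) * (π / 2) - m * (π / 2)) = 1 := by
    rw [← sub_mul, Nat.cast_succ, add_sub_cancel_left, one_mul, sin_pi_div_two]
  fin_cases k
  · exact sin_succ_sub 0
  · exact sin_succ_sub 1
  · exact sin_succ_sub 2
  · calc sin (((0 : ℕ) : ℝ) * (π / 2) - (3 : ℕ) * (π / 2))
        = sin (π / 2 - 2 * π) := by congr 1; push_cast; ring
      _ = 1 := by rw [sin_sub_two_pi, sin_pi_div_two]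

/-- The Hamming graph `H(ι, α)` on words `ι → α`, with an edge between words differing in exactly
one letter. The hypercube of dimension `n` is `hammingGraph (Fin n) (ZMod 2)`. -/
def hammingGraph (ι α : Type*) [Fintype ι] [DecidableEq α] : SimpleGraph (ι → α) where
  Adj u v := hammingDist u v = 1
  symm.symm u v := by rw [hammingDist_comm]; exact id
  loopless.irrefl u := by simp

section HammingGraph

variable {ι κ α : Type*} [Fintype ι] [Fintype κ] [DecidableEq α]

theorem hammingDist_comp_equiv (e : ι ≃ κ) (u v : κ → α) :
    hammingDist (u ∘ e) (v ∘ e) = hammingDist u v := by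
  simp only [hammingDist, Finset.card_filter]
  exact e.sum_comp fun i => if u i ≠ v i then 1 else 0

theorem hammingDist_eq_inl_add_inr (u v : ι ⊕ κ → α) :
    hammingDist u v =
      hammingDist (u ∘ Sum.inl) (v ∘ Sum.inl) + hammingDist (u ∘ Sum.inr) (v ∘ Sum.inr) := by
  simp [hammingDist, Finset.card_filter]

theorem hammingDist_eq_ncard (u v : ι → α) : hammingDist u v = {i | u i ≠ v i}.ncard := by
  simp [hammingDist, ← Set.ncard_coe_finset]

namespace hammingGraph

variable (α) in
/-- Renaming the coordinates, as an isomorphism of Hamming graphs. -/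
def reindexIso (e : ι ≃ κ) : hammingGraph ι α ≃g hammingGraph κ α where
  toEquiv := e.arrowCongr (Equiv.refl α)
  map_rel_iff' {u v} := (hammingDist_comp_equiv e.symm u v).congr_left

variable (ι κ α) in
/-- Splitting a word into two blocks, as an isomorphism with a Cartesian product. -/
def sumIso : hammingGraph (ι ⊕ κ) α ≃g hammingGraph ι α □ hammingGraph κ α where
  toEquiv := Equiv.sumArrowEquivProdArrow ι κ α
  map_rel_iff' {u v} := by
    change hammingDist (u ∘ Sum.inl) (v ∘ Sum.inl) = 1 ∧ u ∘ Sum.inr = v ∘ Sum.inr ∨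
      hammingDist (u ∘ Sum.inr) (v ∘ Sum.inr) = 1 ∧ u ∘ Sum.inl = v ∘ Sum.inl ↔
        hammingDist u v = 1
    rw [hammingDist_eq_inl_add_inr, ← hammingDist_eq_zero, ← hammingDist_eq_zero]
    omega

end hammingGraph

end HammingGraph

/-- The cyclic Gray code on two bits, as an isomorphism from the 4-cycle to the 2-cube. -/
noncomputable def grayCodeIso : SimpleGraph.cycleGraph 4 ≃g hammingGraph (Fin 2) (ZMod 2) where
  toEquiv := Equiv.ofBijective ![![0, 0], ![1, 0], ![1, 1], ![0, 1]] (by decide)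
  map_rel_iff' {i j} := by
    change hammingDist _ _ = 1 ↔ _
    revert i j
    simp only [Equiv.ofBijective_apply]
    decide

theorem exists_isCDE_hammingGraph_two_mul (m : ℕ) :
    ∃ θ, IsCDE (hammingGraph (Fin (2 * m)) (ZMod 2)) θ := by
  induction m with
  | zero => exact ⟨0, by simp [IsCDE]⟩
  | succ m ih =>
    obtain ⟨θ, hθ⟩ := ih
    have square := isCDE_cycleGraph_four.comp_iso grayCodeIso.symm
    let split : hammingGraph (Fin (2 * (m + 1))) (ZMod 2) ≃g
        hammingGraph (Fin (2 * m)) (ZMod 2) □ hammingGraph (Fin 2) (ZMod 2) :=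
      (hammingGraph.reindexIso (ZMod 2) finSumFinEquiv.symm).trans (hammingGraph.sumIso _ _ _)
    exact ⟨_, (hθ.boxProd square).comp_iso split⟩

theorem stmt4_general {ι : Type*} [Fintype ι] [DecidableEq ι] (hι : Even (Fintype.card ι))
    (G : SimpleGraph (ι → ZMod 2))
    (hG : ∀ u v : ι → ZMod 2, G.Adj u v ↔ ({i | u i ≠ v i} : Set ι).ncard = 1) :
    ∃ θ : (ι → ZMod 2) → ℝ, IsCDE G θ := by
  obtain rfl : G = hammingGraph ι (ZMod 2) := by
    ext u v
    exact (hG u v).trans (hammingDist_eq_ncard u v).symm.congr_left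
  obtain ⟨m, hm⟩ := hι.exists_two_nsmul
  obtain ⟨θ, hθ⟩ := exists_isCDE_hammingGraph_two_mul m
  exact ⟨_, hθ.comp_iso (hammingGraph.reindexIso _ (Fintype.equivFinOfCardEq hm))⟩

/-- the hypercube graph on `Fin 4 → ZMod 2` (adjacent iff differing in exactly
one coordinate) admits a completely degenerate equilibrium. -/
theorem stmt4 (G : SimpleGraph (Fin 4 → ZMod 2))
    (hG : ∀ u v : Fin 4 → ZMod 2, G.Adj u v ↔ ({i | u i ≠ v i} : Set (Fin 4)).ncard = 1) :
    ∃ θ : (Fin 4 → ZMod 2) → ℝ, IsCDE G θ := by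
  exact stmt4_general (by decide) G hG
end

section
/- Let G be a connected simple graph on Fin N with N ≥ 2, K > 0, ω : Fin N → ℝ, and let θ : Fin N → ℝ be a completely degenerate equilibrium of the non-identical Kuramoto system with coupling K and frequencies ω. Then θ is neither a local minimum nor a local maximum of the energy E : (Fin N → ℝ) → ℝ, E(φ) = −∑_h ω h · φ h + K·(1/2)·∑_{p,q} a(p,q)·(1 − cos(φ p − φ q)). -/
/-!
Where every coupled phase difference has cosine `0`, each interaction term changes by an odd
function of the perturbation, so `E (θ + δ) + E (θ - δ) = 2 E θ` and a local extremum at `θ` forces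
`E` to be constant near `θ`. But moving the two ends of an edge `uv` by `s` and `-s` gives a second
difference of `E` that only involves that edge; it equals `2 K cos (θ u - θ v + s) (1 - cos s)`,
which is nonzero for small `s > 0`, as `cos (θ u - θ v + s) = ± sin s`.
-/

open Real

/-- A completely degenerate equilibrium of the non-identical Kuramoto system with coupling
`K` and intrinsic frequencies `ω`. -/
def IsCDENonId {N : ℕ} (G : SimpleGraph (Fin N)) (K : ℝ) (ω θ : Fin N → ℝ) : Prop :=
  (∀ k, ω k + K * ∑ j, adjInd G j k * Real.sin (θ j - θ k) = 0) ∧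
  (∀ j k, G.Adj j k → Real.cos (θ j - θ k) = 0)

/-- The energy of the non-identical Kuramoto system (double sum over ordered pairs,
halved). -/
noncomputable def energyNonId {N : ℕ} (G : SimpleGraph (Fin N)) (K : ℝ) (ω : Fin N → ℝ)
    (φ : Fin N → ℝ) : ℝ :=
  - ∑ h, ω h * φ h + K * ((1 / 2) * ∑ p, ∑ q, adjInd G p q * (1 - Real.cos (φ p - φ q)))

section LocalExtr

open Filter Topology fwdDiff

theorem eventually_eq_of_isLocalExtr_of_add_add_sub_eq {X β : Type*} [AddGroup X]
    [TopologicalSpace X] [IsTopologicalAddGroup X] [AddCommGroup β] [PartialOrder β]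
    [IsOrderedAddMonoid β] {f : X → β} {a : X} (hf : ∀ x, f (a + x) + f (a - x) = f a + f a)
    (h : IsLocalExtr f a) : ∀ᶠ x in 𝓝 0, f (a + x) = f a := by
  have hadd : Tendsto (fun x ↦ a + x) (𝓝 0) (𝓝 a) := Continuous.tendsto' (by fun_prop) _ _ (by simp)
  have hsub : Tendsto (fun x ↦ a - x) (𝓝 0) (𝓝 a) := Continuous.tendsto' (by fun_prop) _ _ (by simp)
  rcases h with hmin | hmax
  · filter_upwards [hadd.eventually hmin, hsub.eventually hmin] with x hx hx'
    exact ((add_eq_add_iff_eq_and_eq hx hx').1 (hf x).symm).1.symm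
  · filter_upwards [hadd.eventually hmax, hsub.eventually hmax] with x hx hx'
    exact ((add_eq_add_iff_eq_and_eq hx hx').1 (hf x)).1

theorem eventually_fwdDiff_fwdDiff_eq_zero {X β : Type*} [AddCommMonoid X] [TopologicalSpace X]
    [ContinuousAdd X] [AddCommGroup β] {f : X → β} {a : X}
    (hf : ∀ᶠ x in 𝓝 0, f (a + x) = f a) :
    ∀ᶠ z : X × X in 𝓝 0, Δ_[z.1] (Δ_[z.2] f) a = 0 := by
  have hfst : Tendsto (fun z : X × X ↦ z.1) (𝓝 0) (𝓝 0) := continuous_fst.tendsto' _ _ rfl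
  have hsnd : Tendsto (fun z : X × X ↦ z.2) (𝓝 0) (𝓝 0) := continuous_snd.tendsto' _ _ rfl
  have hadd : Tendsto (fun z : X × X ↦ z.1 + z.2) (𝓝 0) (𝓝 0) := by simpa using hfst.add hsnd
  filter_upwards [hfst.eventually hf, hsnd.eventually hf, hadd.eventually hf] with z h₁ h₂ h₁₂
  simp only [fwdDiff, add_assoc, h₁, h₂, h₁₂, sub_self]

end LocalExtr

section KuramotoEnergy

open Filter Topology fwdDiff

variable {V : Type*} [Fintype V]

theorem fwdDiff_fwdDiff_single_sum_sum [DecidableEq V] {M β : Type*} [AddCommMonoid M]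
    [AddCommGroup β] (f : V → V → M → M → β) {u v : V} (huv : u ≠ v) (x y : M) :
    Δ_[Pi.single u x] (Δ_[Pi.single v y] fun φ : V → M ↦ ∑ p, ∑ q, f p q (φ p) (φ q)) =
      Δ_[Pi.single u x] (Δ_[Pi.single v y] fun φ : V → M ↦
        f u v (φ u) (φ v) + f v u (φ v) (φ u)) := by
  ext φ
  simp only [fwdDiff, ← Finset.sum_sub_distrib, ← Fintype.sum_prod_type']
  rw [Fintype.sum_eq_add (u, v) (v, u) (by simp [huv])]
  · abel
  · rintro ⟨p, q⟩ ⟨hpq, hqp⟩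
    have hmiss : (p ≠ u ∧ q ≠ u) ∨ (p ≠ v ∧ q ≠ v) := by grind
    rcases hmiss with ⟨hp, hq⟩ | ⟨hp, hq⟩ <;> simp [hp, hq]

/-- The energy of phase oscillators on `V` with natural frequencies `ω` and pairwise couplings
`w p q`, possibly of mixed signs. Taking `w` to be `K` times the adjacency matrix of a graph gives
`energyNonId`. -/
noncomputable def kuramotoEnergy (w : Matrix V V ℝ) (ω φ : V → ℝ) : ℝ :=
  -(ω ⬝ᵥ φ) + 1 / 2 * ∑ p, ∑ q, w p q * (1 - cos (φ p - φ q))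

variable {w : Matrix V V ℝ} {ω θ : V → ℝ}

theorem kuramotoEnergy_add_add_kuramotoEnergy_sub
    (hθ : ∀ p q, w p q ≠ 0 → cos (θ p - θ q) = 0) (δ : V → ℝ) :
    kuramotoEnergy w ω (θ + δ) + kuramotoEnergy w ω (θ - δ) =
      kuramotoEnergy w ω θ + kuramotoEnergy w ω θ := by
  have hpair (p q : V) : w p q * (1 - cos ((θ + δ) p - (θ + δ) q)) +
      w p q * (1 - cos ((θ - δ) p - (θ - δ) q)) =
      w p q * (1 - cos (θ p - θ q)) + w p q * (1 - cos (θ p - θ q)) := by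
    obtain hw | hw := eq_or_ne (w p q) 0
    · simp only [hw, zero_mul]
    · have hadd : (θ + δ) p - (θ + δ) q = (θ p - θ q) + (δ p - δ q) := add_sub_add_comm ..
      have hsub : (θ - δ) p - (θ - δ) q = (θ p - θ q) - (δ p - δ q) := sub_sub_sub_comm ..
      rw [hadd, hsub, cos_add (θ p - θ q), cos_sub (θ p - θ q), hθ p q hw]
      ring
  have hsum := Fintype.sum_congr _ _ fun p ↦ Fintype.sum_congr _ _ (hpair p)
  simp only [Finset.sum_add_distrib] at hsum
  simp only [kuramotoEnergy, dotProduct_add, dotProduct_sub]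
  linear_combination 1 / 2 * hsum

theorem fwdDiff_fwdDiff_single_kuramotoEnergy [DecidableEq V] (hw : w.IsSymm) {u v : V}
    (huv : u ≠ v) (s t : ℝ) (φ : V → ℝ) :
    Δ_[Pi.single u s] (Δ_[Pi.single v t] (kuramotoEnergy w ω)) φ =
      w u v * (cos (φ u - φ v + s) + cos (φ u - φ v - t)
        - cos (φ u - φ v + s - t) - cos (φ u - φ v)) := by
  have hpair := congrFun
    (fwdDiff_fwdDiff_single_sum_sum (fun p q a b ↦ w p q * (1 - cos (a - b))) huv s t) φ
  have hsymm (a b : ℝ) : w u v * (1 - cos (a - b)) + w v u * (1 - cos (b - a)) =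
      2 * (w u v * (1 - cos (a - b))) := by
    rw [hw.apply u v, ← cos_neg (b - a), neg_sub]
    ring
  simp only [hsymm, fwdDiff, Pi.add_apply, Pi.single_eq_same, Pi.single_eq_of_ne huv,
    Pi.single_eq_of_ne huv.symm, add_zero] at hpair
  simp only [fwdDiff, kuramotoEnergy, dotProduct_add, Pi.add_apply]
  rw [show φ u - φ v + s - t = φ u + s - (φ v + t) by ring,
    show φ u - φ v + s = φ u + s - φ v by ring, show φ u - φ v - t = φ u - (φ v + t) by ring]
  linear_combination 1 / 2 * hpair

theorem fwdDiff_fwdDiff_single_neg_kuramotoEnergy [DecidableEq V] (hw : w.IsSymm) {u v : V}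
    (huv : u ≠ v) (s : ℝ) (φ : V → ℝ) :
    Δ_[Pi.single u s] (Δ_[Pi.single v (-s)] (kuramotoEnergy w ω)) φ =
      2 * w u v * (cos (φ u - φ v + s) * (1 - cos s)) := by
  have hprod := two_mul_cos_mul_cos (φ u - φ v + s) s
  rw [add_sub_cancel_right] at hprod
  rw [fwdDiff_fwdDiff_single_kuramotoEnergy hw huv, sub_neg_eq_add, sub_neg_eq_add]
  linear_combination w u v * hprod

theorem cos_add_mul_one_sub_cos_ne_zero {x s : ℝ} (hx : cos x = 0) (hs : sin s ≠ 0) :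
    cos (x + s) * (1 - cos s) ≠ 0 := by
  have hsin : sin x ≠ 0 := fun h ↦ by simpa [hx] using sin_eq_zero_iff_cos_eq.1 h
  have hcos : cos s ≠ 1 := fun h ↦ hs (sin_eq_zero_iff_cos_eq.2 (.inl h))
  have hadd : cos (x + s) = -(sin x * sin s) := by rw [cos_add, hx, zero_mul, zero_sub]
  rw [hadd]
  exact mul_ne_zero (neg_ne_zero.2 (mul_ne_zero hsin hs)) (sub_ne_zero.2 hcos.symm)

theorem stmt17_general (hw : w.IsSymm) {u v : V} (huv : w u v ≠ 0)
    (hθ : ∀ p q, w p q ≠ 0 → cos (θ p - θ q) = 0) :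
    ¬ IsLocalExtr (kuramotoEnergy w ω) θ := by
  classical
  intro hext
  have hne : u ≠ v := by
    rintro rfl
    simpa using hθ u u huv
  have hconst := eventually_eq_of_isLocalExtr_of_add_add_sub_eq
    (kuramotoEnergy_add_add_kuramotoEnergy_sub hθ) hext
  have hmove : Tendsto (fun s : ℝ ↦ ((Pi.single u s, Pi.single v (-s)) : (V → ℝ) × (V → ℝ)))
      (𝓝[>] 0) (𝓝 0) := by
    refine (Continuous.tendsto' ?_ _ _ (by simp)).mono_left nhdsWithin_le_nhds
    have hsingle (i : V) : Continuous fun x : ℝ ↦ (Pi.single i x : V → ℝ) :=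
      continuous_single (A := fun _ ↦ ℝ) i
    exact (hsingle u).prodMk ((hsingle v).comp continuous_neg)
  obtain ⟨s, hdiff, hs⟩ := ((hmove.eventually
    (eventually_fwdDiff_fwdDiff_eq_zero hconst)).and (Ioo_mem_nhdsGT pi_pos)).exists
  rw [fwdDiff_fwdDiff_single_neg_kuramotoEnergy hw hne] at hdiff
  exact mul_ne_zero (mul_ne_zero two_ne_zero huv)
    (cos_add_mul_one_sub_cos_ne_zero (hθ u v huv) (sin_pos_of_mem_Ioo hs).ne') hdiff

end KuramotoEnergy

theorem adjInd_comm {V : Type*} (G : SimpleGraph V) (p q : V) : adjInd G p q = adjInd G q p := by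
  classical
  exact if_congr (G.adj_comm p q) rfl rfl

theorem adjInd_ne_zero_iff {V : Type*} {G : SimpleGraph V} {p q : V} :
    adjInd G p q ≠ 0 ↔ G.Adj p q := by
  simp [adjInd]

theorem energyNonId_eq_kuramotoEnergy {N : ℕ} (G : SimpleGraph (Fin N)) (K : ℝ)
    (ω : Fin N → ℝ) :
    energyNonId G K ω = kuramotoEnergy (K • Matrix.of (adjInd G)) ω := by
  ext φ
  simp only [energyNonId, kuramotoEnergy, dotProduct, Matrix.smul_apply, Matrix.of_apply,
    smul_eq_mul, mul_assoc, ← Finset.mul_sum]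
  ring

theorem not_isLocalExtr_energyNonId {N : ℕ} {G : SimpleGraph (Fin N)} (hG : G ≠ ⊥) {K : ℝ}
    (hK : K ≠ 0) {ω θ : Fin N → ℝ} (hθ : ∀ p q, G.Adj p q → cos (θ p - θ q) = 0) :
    ¬ IsLocalExtr (energyNonId G K ω) θ := by
  obtain ⟨u, v, huv⟩ := SimpleGraph.ne_bot_iff_exists_adj.1 hG
  rw [energyNonId_eq_kuramotoEnergy]
  have hsymm : (Matrix.of (adjInd G)).IsSymm := .ext fun p q ↦ adjInd_comm G q p
  refine stmt17_general (hsymm.smul K) (u := u) (v := v)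
    (mul_ne_zero hK (adjInd_ne_zero_iff.2 huv)) fun p q hpq ↦ hθ p q ?_
  exact adjInd_ne_zero_iff.1 (right_ne_zero_of_mul hpq)

/-- on a connected graph with at least two vertices, a completely degenerate
equilibrium of the non-identical system (coupling `K > 0`) is neither a local minimum nor a
local maximum of the energy. -/
theorem stmt17 {N : ℕ} (hN : 2 ≤ N) (G : SimpleGraph (Fin N)) (hG : G.Connected)
    (K : ℝ) (hK : 0 < K) (ω θ : Fin N → ℝ) (hθ : IsCDENonId G K ω θ) :
    ¬ IsLocalMin (energyNonId G K ω) θ ∧ ¬ IsLocalMax (energyNonId G K ω) θ :=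
  have : Nontrivial (Fin N) := Fin.nontrivial_iff_two_le.2 hN
  have hbot : G ≠ ⊥ := fun h ↦ SimpleGraph.not_connected_bot (h ▸ hG)
  not_or.1 (not_isLocalExtr_energyNonId hbot hK.ne' hθ.2)
end
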